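/- arXiv:1702.06420 — 4 statements merged into one kernel-verified Lean document; each statement's English description precedes it below -/
import Mathlib

section
/- For every integer p ≥ 0, the exponential generating function of the p-Bernoulli numbers satisfies: there exists ε > 0 such that for every real number t with 0 < t < ε, the series Σ_{n=0}^∞ B_{n,p} t^n/n! converges and equals (p+1)(t − H_p)e^{pt}/(e^t − 1)^{p+1} + (p+1) Σ_{k=1}^{p} C(p,k) H_k/(e^t − 1)^{k+1}. -/
/-- Stirling numbers of the second kind. -/
def stirling2 (n k : ℕ) : ℚ :=
  (1 / (Nat.factorial k : ℚ)) *
    ∑ j ∈ Finset.range (k + 1), (-1 : ℚ) ^ (k - j) * (Nat.choose k j : ℚ) * (j : ℚ) ^ n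

/-- The `p`-Bernoulli numbers. -/
def pBernoulli (n p : ℕ) : ℚ :=
  ∑ k ∈ Finset.range (n + 1),
    (-1 : ℚ) ^ k * stirling2 n k * ((Nat.choose (k + p + 1) k : ℚ))⁻¹ * (Nat.factorial k : ℚ)

/-- Harmonic numbers. -/
def harmonic' (n : ℕ) : ℚ := ∑ j ∈ Finset.Icc 1 n, (1 : ℚ) / (j : ℚ)

/-!
The numbers `k! S(n, k)` are the forward differences `Δ^k (x ↦ x ^ n)` at `0`. Applying `Δ^k` to the
series of `x ↦ exp (x * t)` therefore gives `∑ₙ k! S(n, k) tⁿ / n! = (eᵗ - 1)ᵏ`, and interchanging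
sums turns the generating function of the `p`-Bernoulli numbers into
`∑ₖ (-x)ᵏ / C(k + p + 1, k)` at `x = eᵗ - 1`. As `S(n, k) ≥ 0`, the interchange is legitimate when
`exp ‖t‖ - 1 < 1`.

The numbers `1 / ((p + 1) * C(k + p + 1, k))` form the Leibniz harmonic triangle, in which each
entry is the sum of two entries of the next row. So the series for `p + 1` is the one for `p` minus
its shift, and induction starts from the logarithmic series at `p = 0`.
-/

open Finset
open scoped Nat

theorem fwdDiff_iter_succ_id_mul {R : Type*} [CommRing R] (f : R → R) (k : ℕ) (y : R) :
    (fwdDiff 1)^[k + 1] (fun x ↦ x * f x) y =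
      (y + (k + 1)) * (fwdDiff 1)^[k + 1] f y + (k + 1) * (fwdDiff 1)^[k] f y := by
  induction k generalizing y with
  | zero => simp [fwdDiff]; ring
  | succ k ih =>
    have iter_succ (g : R → R) (m : ℕ) (z : R) :
        (fwdDiff 1)^[m + 1] g z = (fwdDiff 1)^[m] g (z + 1) - (fwdDiff 1)^[m] g z := by
      rw [Function.iterate_succ_apply', fwdDiff]
    rw [iter_succ, ih, ih, iter_succ f (k + 1), iter_succ f k y]
    push_cast
    ring

theorem fwdDiff_iter_pow_apply_zero {R : Type*} [CommRing R] (n k : ℕ) :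
    (fwdDiff 1)^[k] (fun x : R ↦ x ^ n) 0 = k ! * Nat.stirlingSecond n k := by
  induction n generalizing k with
  | zero =>
    cases k with
    | zero => simp
    | succ k =>
      rw [fwdDiff_iter_pow_eq_zero_of_lt k.succ_pos]
      simp
  | succ n ih =>
    cases k with
    | zero => simp
    | succ k =>
      simp only [pow_succ', fwdDiff_iter_succ_id_mul, ih, Nat.stirlingSecond_succ_succ,
        Nat.factorial_succ]
      push_cast
      ring

theorem stirling2_eq_stirlingSecond (n k : ℕ) : stirling2 n k = Nat.stirlingSecond n k := by
  have hfact : (k ! : ℚ) ≠ 0 := by positivity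
  rw [← mul_right_inj' hfact, ← fwdDiff_iter_pow_apply_zero, fwdDiff_iter_eq_sum_shift, stirling2,
    ← mul_assoc, mul_one_div_cancel hfact, one_mul]
  simp

theorem hasSum_fwdDiff_iter {ι M G : Type*} [AddCommMonoid M] [AddCommGroup G]
    [TopologicalSpace G] [IsTopologicalAddGroup G] {f : ι → M → G} {g : M → G}
    (hf : ∀ x, HasSum (fun i ↦ f i x) (g x)) (h : M) (k : ℕ) (y : M) :
    HasSum (fun i ↦ (fwdDiff h)^[k] (f i) y) ((fwdDiff h)^[k] g y) := by
  induction k generalizing y with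
  | zero => exact hf y
  | succ k ih =>
    simp only [Function.iterate_succ_apply', fwdDiff]
    exact (ih (y + h)).sub (ih y)

section StirlingTransform

variable {𝕜 : Type*} [RCLike 𝕜]

theorem hasSum_stirlingSecond_egf (k : ℕ) (t : 𝕜) :
    HasSum (fun n ↦ (k ! * Nat.stirlingSecond n k : 𝕜) * (t ^ n / n !))
      ((NormedSpace.exp t - 1) ^ k) := by
  let expMul : AddChar 𝕜 𝕜 :=
    { toFun := fun x ↦ NormedSpace.exp (x * t)
      map_zero_eq_one' := by simp
      map_add_eq_mul' := fun x y ↦ by rw [add_mul, NormedSpace.exp_add] }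
  have hexp (x : 𝕜) : HasSum (fun n ↦ (t ^ n / n ! : 𝕜) • x ^ n) (NormedSpace.exp (x * t)) := by
    convert! NormedSpace.expSeries_div_hasSum_exp (x * t) using 2 with n
    rw [smul_eq_mul, mul_pow]
    ring
  convert! hasSum_fwdDiff_iter (g := expMul) hexp 1 k 0 using 1
  · funext n
    rw [← fwdDiff_iter_pow_apply_zero, mul_comm, ← smul_eq_mul, ← Pi.smul_apply,
      ← fwdDiff_iter_const_smul]
    rfl
  · rw [fwdDiff_addChar_eq]
    simp [expMul]

theorem hasSum_stirlingSecond_transform {a : ℕ → 𝕜} {s t : 𝕜}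
    (ha : Summable fun k ↦ ‖a k‖ * (Real.exp ‖t‖ - 1) ^ k)
    (hs : HasSum (fun k ↦ a k * (NormedSpace.exp t - 1) ^ k) s) :
    HasSum
      (fun n ↦ (∑ k ∈ range (n + 1), a k * (k ! * Nat.stirlingSecond n k)) * (t ^ n / n !)) s := by
  let F : ℕ × ℕ → 𝕜 := fun q ↦
    a q.1 * ((q.1 ! * Nat.stirlingSecond q.2 q.1) * (t ^ q.2 / q.2 !))
  have hrow (k : ℕ) : HasSum (fun n ↦ F (k, n)) (a k * (NormedSpace.exp t - 1) ^ k) :=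
    (hasSum_stirlingSecond_egf k t).mul_left _
  have hnorm_row (k : ℕ) :
      HasSum (fun n ↦ ‖F (k, n)‖) (‖a k‖ * (Real.exp ‖t‖ - 1) ^ k) := by
    rw [Real.exp_eq_exp_ℝ]
    simpa [F] using (hasSum_stirlingSecond_egf k ‖t‖).mul_left ‖a k‖
  have hF : Summable F := by
    refine .of_norm <| (summable_prod_of_nonneg fun _ ↦ norm_nonneg _).2
      ⟨fun k ↦ (hnorm_row k).summable, ?_⟩
    simpa only [(hnorm_row _).tsum_eq] using ha
  have hFs : HasSum F s := by
    rw [← (hF.hasSum.prod_fiberwise hrow).unique hs]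
    exact hF.hasSum
  have hcol (n : ℕ) : HasSum (fun k ↦ F (k, n))
      ((∑ k ∈ range (n + 1), a k * (k ! * Nat.stirlingSecond n k)) * (t ^ n / n !)) := by
    have hzero : ∀ k ∉ range (n + 1), F (k, n) = 0 := fun k hk ↦ by
      have hnk : n < k := by simpa [Nat.lt_succ_iff] using hk
      simp [F, Nat.stirlingSecond_eq_zero_of_lt hnk]
    have hfinite : HasSum (fun k ↦ F (k, n)) (∑ k ∈ range (n + 1), F (k, n)) :=
      hasSum_sum_of_ne_finset_zero hzero
    simpa only [F, sum_mul, mul_assoc] using hfinite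
  exact ((Equiv.prodComm ℕ ℕ).hasSum_iff.2 hFs).prod_fiberwise hcol

end StirlingTransform

/-- The entry `1 / ((n + 1) * n.choose k)`, `n = p + k`, of the Leibniz harmonic triangle, written
with factorials; equivalently the Beta integral `∫ u in 0..1, u ^ k * (1 - u) ^ p`. -/
def leibnizTriangle (p k : ℕ) : ℚ := k ! * p ! / (k + p + 1)!

theorem leibnizTriangle_zero_left (k : ℕ) : leibnizTriangle 0 k = 1 / (k + 1) := by
  rw [leibnizTriangle, Nat.factorial_succ]
  push_cast
  field_simp
  simp

theorem leibnizTriangle_comm (p k : ℕ) : leibnizTriangle p k = leibnizTriangle k p := by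
  rw [leibnizTriangle, leibnizTriangle, mul_comm, add_comm k p]

theorem leibnizTriangle_succ_left (p k : ℕ) :
    leibnizTriangle (p + 1) k = leibnizTriangle p k - leibnizTriangle p (k + 1) := by
  rw [leibnizTriangle, leibnizTriangle, leibnizTriangle, ← add_assoc, add_right_comm k 1 p,
    Nat.factorial_succ (k + p + 1), Nat.factorial_succ p, Nat.factorial_succ k]
  push_cast
  field_simp
  ring

theorem inv_choose_eq_mul_leibnizTriangle {K : Type*} [Field K] [CharZero K] (p k : ℕ) :
    ((k + p + 1).choose k : K)⁻¹ = (p + 1) * leibnizTriangle p k := by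
  rw [add_assoc, Nat.cast_add_choose, inv_div, leibnizTriangle, Nat.factorial_succ p, add_assoc]
  push_cast
  ring

/-- The binomial transform `∑ C(p, k) H_k z ^ k` of the harmonic numbers, as a polynomial function
of `z`. -/
def harmonicBinomSum {K : Type*} [DivisionRing K] (p : ℕ) (z : K) : K :=
  ∑ k ∈ range (p + 1), p.choose k * harmonic k * z ^ k

section HarmonicBinomSum

variable {K : Type*} [Field K]

theorem inv_mul_harmonicBinomSum_inv (p : ℕ) (x : K) :
    x⁻¹ * harmonicBinomSum p x⁻¹ =
      ∑ k ∈ Icc 1 p, (p.choose k : K) * harmonic k / x ^ (k + 1) := by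
  rw [harmonicBinomSum, range_eq_Ico, sum_eq_sum_Ico_succ_bot p.succ_pos, harmonic_zero, mul_add,
    mul_sum]
  simp only [Nat.choose_zero_right, Nat.cast_one, Rat.cast_zero, mul_zero, zero_mul, zero_add,
    Nat.succ_eq_add_one, Ico_add_one_right_eq_Icc]
  refine sum_congr rfl fun k _ ↦ ?_
  ring

variable [CharZero K]

theorem sum_choose_mul_pow_div_succ (p : ℕ) (z : K) :
    ∑ k ∈ range (p + 1), p.choose k * z ^ (k + 1) / (k + 1) =
      ((1 + z) ^ (p + 1) - 1) / (p + 1) := by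
  rw [add_comm 1 z, add_pow, sum_range_succ' _ (p + 1)]
  simp only [one_pow, mul_one, Nat.choose_zero_right, Nat.cast_one, pow_zero,
    add_sub_cancel_right, sum_div]
  refine sum_congr rfl fun k _ ↦ ?_
  have hchoose : ((p : K) + 1) * p.choose k = (p + 1).choose (k + 1) * (k + 1) := by
    exact_mod_cast Nat.add_one_mul_choose_eq p k
  rw [div_eq_div_iff (Nat.cast_add_one_ne_zero k) (Nat.cast_add_one_ne_zero p)]
  linear_combination z ^ (k + 1) * hchoose

theorem harmonicBinomSum_succ (p : ℕ) (z : K) :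
    harmonicBinomSum (p + 1) z =
      (1 + z) * harmonicBinomSum p z + ((1 + z) ^ (p + 1) - 1) / (p + 1) := by
  have hshift : harmonicBinomSum p z =
      ∑ k ∈ range (p + 1), (p.choose (k + 1) : K) * harmonic (k + 1) * z ^ (k + 1) := by
    rw [harmonicBinomSum, sum_range_succ', sum_range_succ]
    simp
  rw [add_mul, one_mul]
  nth_rw 1 [hshift]
  rw [harmonicBinomSum, harmonicBinomSum, sum_range_succ', mul_sum, ← sum_choose_mul_pow_div_succ,
    harmonic_zero, Rat.cast_zero, mul_zero, zero_mul, add_zero, ← sum_add_distrib,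
    ← sum_add_distrib]
  refine sum_congr rfl fun k _ ↦ ?_
  rw [Nat.choose_succ_succ, harmonic_succ]
  push_cast
  ring

end HarmonicBinomSum

theorem hasSum_leibnizTriangle {x : ℂ} (hx₀ : x ≠ 0) (hx₁ : ‖x‖ < 1) (p : ℕ) :
    HasSum (fun k ↦ (-x) ^ k * (leibnizTriangle p k : ℂ))
      (x⁻¹ * ((Complex.log (1 + x) - harmonic p) * (1 + x⁻¹) ^ p + harmonicBinomSum p x⁻¹)) := by
  induction p with
  | zero =>
    have hlog := Complex.hasSum_taylorSeries_neg_log' (z := -x) (by rwa [norm_neg])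
    convert! hlog.mul_left (-x)⁻¹ using 1
    · funext k
      rw [leibnizTriangle_zero_left, pow_succ]
      push_cast
      field_simp
    · simp [harmonicBinomSum]
  | succ p ih =>
    have htail := (hasSum_nat_add_iff' 1).2 ih
    convert! ih.sub (htail.mul_left (-x)⁻¹) using 1
    · funext k
      rw [leibnizTriangle_succ_left, pow_succ]
      push_cast
      field_simp
    · rw [sum_range_one, leibnizTriangle_comm, leibnizTriangle_zero_left, harmonicBinomSum_succ,
        harmonic_succ, inv_neg]
      push_cast
      ring

theorem summable_inv_choose_mul_pow (p : ℕ) {r : ℝ} (hr₀ : 0 ≤ r) (hr₁ : r < 1) :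
    Summable fun k ↦ ((k + p + 1).choose k : ℝ)⁻¹ * r ^ k := by
  refine .of_nonneg_of_le (fun k ↦ by positivity) (fun k ↦ ?_)
    (summable_geometric_of_lt_one hr₀ hr₁)
  refine mul_le_of_le_one_left (by positivity) (inv_le_one_of_one_le₀ ?_)
  exact_mod_cast Nat.choose_pos (by lia : k ≤ k + p + 1)

theorem pBernoulli_eq_sum_stirlingSecond (n p : ℕ) :
    pBernoulli n p = ∑ k ∈ range (n + 1),
      (-1) ^ k * ((k + p + 1).choose k : ℚ)⁻¹ * (k ! * Nat.stirlingSecond n k) := by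
  refine sum_congr rfl fun k _ ↦ ?_
  rw [stirling2_eq_stirlingSecond]
  ring

theorem harmonic'_eq_harmonic (n : ℕ) : harmonic' n = harmonic n := by
  simp [harmonic', harmonic_eq_sum_Icc]

theorem hasSum_neg_one_pow_mul_inv_choose {x : ℂ} (hx₀ : x ≠ 0) (hx₁ : ‖x‖ < 1) (p : ℕ) :
    HasSum (fun k ↦ (-1) ^ k * ((k + p + 1).choose k : ℂ)⁻¹ * x ^ k)
      ((p + 1) * (Complex.log (1 + x) - harmonic p) * (1 + x) ^ p / x ^ (p + 1) +
        (p + 1) * ∑ k ∈ Icc 1 p, (p.choose k : ℂ) * harmonic k / x ^ (k + 1)) := by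
  convert! (hasSum_leibnizTriangle hx₀ hx₁ p).mul_left (p + 1 : ℂ) using 1
  · funext k
    rw [inv_choose_eq_mul_leibnizTriangle, neg_pow]
    ring
  · have hbase : 1 + x⁻¹ = (1 + x) / x := by field_simp; ring
    rw [mul_add x⁻¹, inv_mul_harmonicBinomSum_inv, hbase, div_pow]
    ring

theorem log_exp_of_norm_lt_pi {t : ℂ} (ht : ‖t‖ < Real.pi) : Complex.log (Complex.exp t) = t :=
  have him : |t.im| < Real.pi := (Complex.abs_im_le_norm t).trans_lt ht
  Complex.log_exp (neg_lt_of_abs_lt him) (lt_of_abs_lt him).le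

theorem pBernoulli_egf_general (p : ℕ) {t : ℂ} (ht₀ : t ≠ 0) (ht : ‖t‖ < Real.log 2) :
    HasSum (fun n ↦ (pBernoulli n p : ℂ) * t ^ n / n !)
      ((p + 1) * (t - harmonic' p) * Complex.exp (p * t) / (Complex.exp t - 1) ^ (p + 1) +
        (p + 1) * ∑ k ∈ Icc 1 p,
          (p.choose k : ℂ) * harmonic' k / (Complex.exp t - 1) ^ (k + 1)) := by
  have hr : Real.exp ‖t‖ - 1 < 1 := by
    linarith [(Real.lt_log_iff_exp_lt two_pos).1 ht]
  have hx₁ : ‖Complex.exp t - 1‖ < 1 := by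
    refine lt_of_le_of_lt ?_ hr
    simpa using Complex.norm_exp_sub_sum_le_exp_norm_sub_sum t 1
  have hlog : Complex.log (Complex.exp t) = t :=
    log_exp_of_norm_lt_pi (by linarith [Real.log_two_lt_d9, Real.pi_gt_three])
  have hx₀ : Complex.exp t - 1 ≠ 0 := by
    intro h
    rw [sub_eq_zero.1 h, Complex.log_one] at hlog
    exact ht₀ hlog.symm
  have hseries := hasSum_neg_one_pow_mul_inv_choose hx₀ hx₁ p
  rw [add_sub_cancel, hlog, ← Complex.exp_nat_mul, Complex.exp_eq_exp_ℂ] at hseries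
  have hsummable := summable_inv_choose_mul_pow p (by simp) hr
  have hegf := hasSum_stirlingSecond_transform (by simpa using hsummable) hseries
  simpa [pBernoulli_eq_sum_stirlingSecond, harmonic'_eq_harmonic, mul_div_assoc,
    Complex.exp_eq_exp_ℂ] using hegf

theorem pBernoulli_egf (p : ℕ) :
    ∃ ε : ℝ, 0 < ε ∧ ∀ t : ℝ, 0 < t → t < ε →
      HasSum (fun n : ℕ => (pBernoulli n p : ℝ) * t ^ n / (Nat.factorial n : ℝ))
        ((p + 1 : ℝ) * (t - (harmonic' p : ℝ)) * Real.exp (p * t) /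
            (Real.exp t - 1) ^ (p + 1) +
          (p + 1 : ℝ) * ∑ k ∈ Finset.Icc 1 p,
            (Nat.choose p k : ℝ) * (harmonic' k : ℝ) / (Real.exp t - 1) ^ (k + 1)) := by
  refine ⟨Real.log 2, Real.log_pos one_lt_two, fun t ht₀ ht ↦ ?_⟩
  exact_mod_cast
    pBernoulli_egf_general p (Complex.ofReal_ne_zero.2 ht₀.ne') (by simpa [abs_of_pos ht₀])
end

section
/- Let n > p ≥ 0 be integers. Define real functions F_0, F_1, …, F_p by F_0(x) = w_n(x) (the n-th geometric polynomial) and F_{j+1}(x) = ∫_0^x F_j(u) du. Then ∫_{-1}^{0} F_p(x) dx = (-1)^p B_{n,p}/(p+1)!. -/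
/-- The geometric polynomials. -/
noncomputable def geomPoly (n : ℕ) (x : ℝ) : ℝ :=
  ∑ k ∈ Finset.range (n + 1), (stirling2 n k : ℝ) * (Nat.factorial k : ℝ) * x ^ k

/-- Iterated antiderivatives of the geometric polynomial, starting at `0`. -/
noncomputable def geomIter (n : ℕ) : ℕ → ℝ → ℝ
  | 0 => geomPoly n
  | j + 1 => fun x => ∫ u in (0 : ℝ)..x, geomIter n j u

/-!
Integrating from `0` sends `x ^ m / m!` to `x ^ (m + 1) / (m + 1)!`, so every `F_p` is explicit
once `w_n` is written in these divided powers. The integral of `F_p` over `[-1, 0]` is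
`-F_{p+1}(-1)`, and its coefficients `(k!)² / (k + p + 1)!` of `S(n,k)` are, up to sign, those of
`B_{n,p} / (p + 1)!`.
-/

open scoped Nat

lemma integral_pow_div_factorial (m : ℕ) (x : ℝ) :
    ∫ u in (0 : ℝ)..x, u ^ m / (m ! : ℝ) = x ^ (m + 1) / ((m + 1)! : ℝ) := by
  rw [intervalIntegral.integral_div, integral_pow, zero_pow m.succ_ne_zero, sub_zero, div_div,
    Nat.factorial_succ, Nat.cast_mul, Nat.cast_add_one]

lemma integral_sum_mul_pow_div_factorial {ι : Type*} (s : Finset ι) (c : ι → ℝ) (m : ι → ℕ)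
    (x : ℝ) :
    ∫ u in (0 : ℝ)..x, ∑ i ∈ s, c i * (u ^ m i / ((m i)! : ℝ)) =
      ∑ i ∈ s, c i * (x ^ (m i + 1) / ((m i + 1)! : ℝ)) := by
  rw [intervalIntegral.integral_finsetSum
    fun i _ => Continuous.intervalIntegrable (by fun_prop) _ _]
  simp only [intervalIntegral.integral_const_mul, integral_pow_div_factorial]

lemma geomPoly_eq_sum_pow_div_factorial (n : ℕ) (x : ℝ) :
    geomPoly n x =
      ∑ k ∈ Finset.range (n + 1), (stirling2 n k : ℝ) * (k ! : ℝ) ^ 2 * (x ^ k / (k ! : ℝ)) := by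
  refine Finset.sum_congr rfl fun k _ => ?_
  have hk : (k ! : ℝ) ≠ 0 := by positivity
  field_simp

lemma geomIter_eq_sum_pow_div_factorial (n p : ℕ) (x : ℝ) :
    geomIter n p x =
      ∑ k ∈ Finset.range (n + 1),
        (stirling2 n k : ℝ) * (k ! : ℝ) ^ 2 * (x ^ (k + p) / ((k + p)! : ℝ)) := by
  induction p generalizing x with
  | zero => exact geomPoly_eq_sum_pow_div_factorial n x
  | succ p ih =>
    simp only [geomIter, ih]
    exact integral_sum_mul_pow_div_factorial _ _ (· + p) x

lemma integral_geomIter_neg_one_zero (n p : ℕ) :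
    ∫ x in (-1 : ℝ)..0, geomIter n p x = -geomIter n (p + 1) (-1) :=
  intervalIntegral.integral_symm 0 (-1)

lemma pBernoulli_div_factorial (n p : ℕ) :
    pBernoulli n p / ((p + 1)! : ℚ) =
      ∑ k ∈ Finset.range (n + 1),
        (-1) ^ k * (stirling2 n k * (k ! : ℚ) ^ 2 / ((k + p + 1)! : ℚ)) := by
  rw [pBernoulli, Finset.sum_div]
  refine Finset.sum_congr rfl fun k _ => ?_
  have hp : ((p + 1)! : ℚ) ≠ 0 := by positivity
  rw [add_assoc k p 1, Nat.cast_add_choose, inv_div]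
  field_simp

lemma geomIter_succ_neg_one (n p : ℕ) :
    geomIter n (p + 1) (-1) = (-1) ^ (p + 1) * ((pBernoulli n p / ((p + 1)! : ℚ) : ℚ) : ℝ) := by
  rw [geomIter_eq_sum_pow_div_factorial, pBernoulli_div_factorial]
  push_cast
  rw [Finset.mul_sum]
  refine Finset.sum_congr rfl fun k _ => ?_
  rw [pow_add, ← add_assoc]
  ring

theorem iterated_integral_geomPoly_eq_pBernoulli_general (n p : ℕ) :
    ∫ x in (-1 : ℝ)..0, geomIter n p x =
      (-1 : ℝ) ^ p * (pBernoulli n p : ℝ) / (Nat.factorial (p + 1) : ℝ) := by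
  rw [integral_geomIter_neg_one_zero, geomIter_succ_neg_one]
  push_cast
  ring

theorem iterated_integral_geomPoly_eq_pBernoulli (n p : ℕ) (h : p < n) :
    ∫ x in (-1 : ℝ)..0, geomIter n p x =
      (-1 : ℝ) ^ p * (pBernoulli n p : ℝ) / (Nat.factorial (p + 1) : ℝ) :=
  iterated_integral_geomPoly_eq_pBernoulli_general n p
end

section
/- For every integer n ≥ 2, Σ_{k=2}^{n} C(n,k) S(k,2) B_{n+1−k} = −(n−1)/2. -/
/-!
Since `k! S(i, k)` is the `k`-th forward difference of `x ^ i` at `0`, the sum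
`∑ i, C(n, i) S(i, k) B_{n+1-i}` is, up to the factor `k!`, the `k`-th difference at `0` of the
polynomial `∑ i, C(n, i) B_{n+1-i} x ^ i = B_{n+1}(x) - x B_n(x)`. Because `Δ B_n(x) = n x ^ (n-1)`,
the second difference of this polynomial is `Δ (x ^ n) - n Δ (x ^ (n-1)) - n x ^ (n-1)`, whose
further differences at `0` are again Stirling numbers.
-/

open Finset fwdDiff
open scoped Nat

theorem fwdDiff_iter_sub {M G : Type*} [AddCommMonoid M] [AddCommGroup G] (h : M) (f g : M → G)
    (n : ℕ) : Δ_[h] ^[n] (f - g) = Δ_[h] ^[n] f - Δ_[h] ^[n] g := by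
  simpa only [fwdDiff_aux.coe_fwdDiffₗ_pow] using map_sub (fwdDiff_aux.fwdDiffₗ M G h ^ n) f g

section BernoulliPolynomial

open Polynomial

theorem fwdDiff_bernoulli_eval (n : ℕ) :
    Δ_[1] (Polynomial.bernoulli n).eval = (n : ℚ) • fun x : ℚ ↦ x ^ (n - 1) := by
  ext x
  simp [fwdDiff, add_comm x, bernoulli_eval_one_add]

theorem fwdDiff_bernoulli_succ_sub_X_mul_bernoulli_eval (n : ℕ) :
    Δ_[1] (Polynomial.bernoulli (n + 1) - X * Polynomial.bernoulli n).eval =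
      (fun x : ℚ ↦ x ^ n) - (n : ℚ) • (fun x : ℚ ↦ x ^ (n - 1)) -
        (Polynomial.bernoulli n).eval := by
  ext x
  have pow_pred : (n : ℚ) * (x * x ^ (n - 1)) = n * x ^ n := by
    cases n <;> simp [pow_succ']
  simp only [fwdDiff, add_comm x, eval_sub, eval_mul, eval_X, bernoulli_eval_one_add, Pi.sub_apply,
    Pi.smul_apply, smul_eq_mul, Nat.add_sub_cancel]
  push_cast
  linear_combination -pow_pred

theorem fwdDiff_iter_bernoulli_succ_sub_X_mul_bernoulli_eval (n k : ℕ) :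
    Δ_[1] ^[k + 2] (Polynomial.bernoulli (n + 1) - X * Polynomial.bernoulli n).eval =
      Δ_[1] ^[k + 1] (fun x : ℚ ↦ x ^ n) - (n : ℚ) • Δ_[1] ^[k + 1] (fun x : ℚ ↦ x ^ (n - 1)) -
        (n : ℚ) • Δ_[1] ^[k] (fun x : ℚ ↦ x ^ (n - 1)) := by
  rw [Function.iterate_succ_apply, fwdDiff_bernoulli_succ_sub_X_mul_bernoulli_eval,
    fwdDiff_iter_sub, fwdDiff_iter_sub, fwdDiff_iter_const_smul,
    Function.iterate_succ_apply _ k (Polynomial.bernoulli n).eval, fwdDiff_bernoulli_eval,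
    fwdDiff_iter_const_smul]

theorem sum_monomial_choose_mul_bernoulli (n : ℕ) :
    ∑ i ∈ range (n + 1), monomial i ((n.choose i : ℚ) * _root_.bernoulli (n + 1 - i)) =
      Polynomial.bernoulli (n + 1) - X * Polynomial.bernoulli n := by
  ext (_ | i)
  · simp [coeff_bernoulli, coeff_monomial]
  · simp only [finsetSum_coeff, coeff_monomial, coeff_sub, coeff_X_mul, coeff_bernoulli,
      sum_ite_eq', mem_range, Nat.add_lt_add_iff_right, Nat.add_le_add_iff_right,
      Nat.add_sub_add_right, Nat.choose_succ_succ]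
    rcases lt_trichotomy i n with hi | rfl | hi
    · simp only [hi, hi.le, if_true, Nat.cast_add]
      ring
    · simp
    · simp [hi.not_gt, hi.not_ge]

theorem sum_choose_mul_bernoulli_mul_pow (n : ℕ) (x : ℚ) :
    ∑ i ∈ range (n + 1), (n.choose i : ℚ) * _root_.bernoulli (n + 1 - i) * x ^ i =
      (Polynomial.bernoulli (n + 1) - X * Polynomial.bernoulli n).eval x := by
  simp [← sum_monomial_choose_mul_bernoulli, eval_finsetSum]

end BernoulliPolynomial

theorem stirling2_zero_right (n : ℕ) : stirling2 n 0 = 0 ^ n := by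
  simp [stirling2]

theorem stirling2_one_right {n : ℕ} (hn : n ≠ 0) : stirling2 n 1 = 1 := by
  simp [stirling2, sum_range_succ, hn]

theorem factorial_mul_stirling2 (n k : ℕ) :
    (k ! : ℚ) * stirling2 n k = Δ_[1] ^[k] (fun x : ℚ ↦ x ^ n) 0 := by
  have hk : (k ! : ℚ) ≠ 0 := by positivity
  simp [stirling2, fwdDiff_iter_eq_sum_shift, hk]

theorem stirling2_eq_zero_of_lt {n k : ℕ} (h : n < k) : stirling2 n k = 0 := by
  have hk : (k ! : ℚ) ≠ 0 := by positivity
  simpa [fwdDiff_iter_pow_eq_zero_of_lt h, hk] using factorial_mul_stirling2 n k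

theorem factorial_mul_sum_mul_stirling2 (s : Finset ℕ) (a : ℕ → ℚ) (k : ℕ) :
    (k ! : ℚ) * ∑ i ∈ s, a i * stirling2 i k = Δ_[1] ^[k] (fun x ↦ ∑ i ∈ s, a i * x ^ i) 0 := by
  have sum_eq : (fun x ↦ ∑ i ∈ s, a i * x ^ i) = ∑ i ∈ s, a i • fun x : ℚ ↦ x ^ i := by
    ext x
    simp
  simp [sum_eq, mul_sum, ← factorial_mul_stirling2, mul_left_comm]

-- At `n = 0` the truncated `n - 1` does no harm: the terms containing it are multiplied by `n`.
theorem sum_stirling2_bernoulli_two_general (n k : ℕ) :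
    ∑ i ∈ Icc (k + 2) n, (n.choose i : ℚ) * stirling2 i (k + 2) * bernoulli (n + 1 - i) =
      (stirling2 n (k + 1) -
        n * (stirling2 (n - 1) (k + 1) + stirling2 (n - 1) k / (k + 1))) / (k + 2) := by
  have extend_range :
      ∑ i ∈ Icc (k + 2) n, (n.choose i : ℚ) * stirling2 i (k + 2) * bernoulli (n + 1 - i) =
        ∑ i ∈ range (n + 1), (n.choose i : ℚ) * bernoulli (n + 1 - i) * stirling2 i (k + 2) := by
    simp_rw [mul_right_comm _ (stirling2 _ _)]
    refine sum_subset (by grind) fun i _ hi ↦ ?_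
    rw [stirling2_eq_zero_of_lt (by grind), mul_zero]
  have factorial_mul_sum :
      ((k + 2)! : ℚ) *
          ∑ i ∈ range (n + 1), (n.choose i : ℚ) * bernoulli (n + 1 - i) * stirling2 i (k + 2) =
        (k + 1)! * stirling2 n (k + 1) - n * ((k + 1)! * stirling2 (n - 1) (k + 1)) -
          n * (k ! * stirling2 (n - 1) k) := by
    simp_rw [factorial_mul_sum_mul_stirling2, sum_choose_mul_bernoulli_mul_pow,
      fwdDiff_iter_bernoulli_succ_sub_X_mul_bernoulli_eval, factorial_mul_stirling2, Pi.sub_apply,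
      Pi.smul_apply, smul_eq_mul]
  have hk : (k ! : ℚ) ≠ 0 := by positivity
  rw [extend_range]
  simp only [Nat.factorial_succ, Nat.cast_mul, Nat.cast_succ] at factorial_mul_sum
  field_simp
  refine mul_left_cancel₀ hk ?_
  linear_combination factorial_mul_sum

theorem sum_stirling2_bernoulli_two (n : ℕ) (h : 2 ≤ n) :
    ∑ k ∈ Finset.Icc 2 n, (Nat.choose n k : ℚ) * stirling2 k 2 * bernoulli (n + 1 - k) =
      -((n : ℚ) - 1) / 2 := by
  simpa [stirling2_zero_right, stirling2_one_right, show n ≠ 0 by lia, show n - 1 ≠ 0 by lia]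
    using sum_stirling2_bernoulli_two_general n 0
end

section
/- For all integers n ≥ 0 and p ≥ 0, B_{n,p} = ((p+1)/p!) Σ_{j=0}^{p} (-1)^j c(p,j) B_{n+j}, where B_m denotes the m-th Bernoulli number. -/
/-- Unsigned Stirling numbers of the first kind, defined as the coefficients of the
ascending factorial `x (x+1) ⋯ (x+p-1)`. -/
noncomputable def stirling1 (p j : ℕ) : ℚ := (ascPochhammer ℚ p).coeff j

/-!
Let `L : ℚ[X] → ℚ` be the umbral functional `X ^ m ↦ B_m`, and `(X)_k` the falling factorial. The
recursion for the Bernoulli numbers says that `L (f (X + 1)) = L f + f'(0)`. For `f = (X)_{k+1}`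
this gives `L (X)_k = (-1) ^ k k! / (k + 1)`, and then, by induction on `p`, the value of
`L ((X)_k (X)_p)`. Since `∑ j, c(p, j) (-X) ^ j = (-1) ^ p (X)_p`, the sum on the right-hand side
is `(-1) ^ p L (X ^ n (X)_p)`, and expanding `X ^ n = ∑ k, S(n, k) (X)_k` by Newton's forward
difference formula turns it into the defining sum of `B_{n,p}`.
-/

open Polynomial hiding bernoulli sum_bernoulli
open scoped Polynomial fwdDiff

section Ring

variable (R : Type*) [Ring R]

lemma ascPochhammer_comp_neg_X (n : ℕ) :
    (ascPochhammer R n).comp (-X) = (-1) ^ n * descPochhammer R n := by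
  have h := ascPochhammer_eval_neg_eq_descPochhammer R[X] X n
  rwa [← ascPochhammer_map C, ← descPochhammer_map C, eval_map, eval_map, eval₂_C_X] at h

lemma descPochhammer_eval_neg_one (n : ℕ) :
    (descPochhammer R n).eval (-1) = (-1) ^ n * n.factorial := by
  rw [← ascPochhammer_eval_one, ← neg_neg (1 : R), ascPochhammer_eval_neg_eq_descPochhammer,
    neg_neg, ← mul_assoc, ← pow_add, Even.neg_one_pow ⟨n, rfl⟩, one_mul]

end Ring

section CommRing

variable (R : Type*) [CommRing R]

lemma descPochhammer_succ_coeff_one (n : ℕ) :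
    (descPochhammer R (n + 1)).coeff 1 = (-1) ^ n * n.factorial := by
  rw [descPochhammer_succ_left, coeff_X_mul, coeff_zero_eq_eval_zero, eval_comp,
    ← descPochhammer_eval_neg_one]
  simp

lemma descPochhammer_succ_comp_X_add_one (n : ℕ) :
    (descPochhammer R (n + 1)).comp (X + 1) =
      descPochhammer R (n + 1) + ((n : R) + 1) • descPochhammer R n := by
  have h_comp : (descPochhammer R (n + 1)).comp (X + 1) = (X + 1) * descPochhammer R n := by
    rw [descPochhammer_succ_left, mul_comp, X_comp, comp_assoc]
    simp
  rw [h_comp, descPochhammer_succ_right, smul_eq_C_mul]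
  simp only [map_add, map_natCast, map_one]
  ring

lemma descPochhammer_mul_descPochhammer_succ (k p : ℕ) :
    descPochhammer R k * descPochhammer R (p + 1) =
      descPochhammer R (k + 1) * descPochhammer R p +
        ((k : R) - p) • (descPochhammer R k * descPochhammer R p) := by
  rw [descPochhammer_succ_right, descPochhammer_succ_right, smul_eq_C_mul]
  simp only [map_sub, map_natCast]
  ring

end CommRing

lemma eq_sum_fwdDiff_iter_smul_descPochhammer {K : Type*} [Field K] [CharZero K] {f : K[X]} {n : ℕ}
    (hf : f.natDegree ≤ n) :
    f = ∑ k ∈ Finset.range (n + 1), (Δ_[1] ^[k] f.eval 0 / k.factorial) • descPochhammer K k := by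
  -- At an integer `m ≥ n` this is the Gregory-Newton formula, whose terms with `k > n` vanish.
  refine eq_of_infinite_eval_eq _ _ <|
    ((Set.Ici_infinite n).image (Nat.cast_injective (R := K)).injOn).mono ?_
  rintro _ ⟨m, hm : n ≤ m, rfl⟩
  have h_vanish (k : ℕ) (hk : n + 1 ≤ k) : m.choose k • Δ_[1] ^[k] f.eval 0 = 0 := by
    rw [fwdDiff_iter_eq_zero_of_degree_lt (by lia), Pi.zero_apply, smul_zero]
  calc
    f.eval (m : K) = ∑ k ∈ Finset.range (m + 1), m.choose k • Δ_[1] ^[k] f.eval 0 := by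
      simpa using shift_eq_sum_fwdDiff_iter 1 f.eval m 0
    _ = ∑ k ∈ Finset.range (n + 1), m.choose k • Δ_[1] ^[k] f.eval 0 :=
      Finset.eventually_constant_sum h_vanish (by lia)
    _ = (∑ k ∈ Finset.range (n + 1),
          (Δ_[1] ^[k] f.eval 0 / k.factorial) • descPochhammer K k).eval (m : K) := by
      rw [eval_finsetSum]
      refine Finset.sum_congr rfl fun k _ => ?_
      have : (k.factorial : K) ≠ 0 := mod_cast k.factorial_ne_zero
      rw [eval_smul, descPochhammer_eval_eq_descFactorial,
        Nat.descFactorial_eq_factorial_mul_choose, nsmul_eq_mul, smul_eq_mul]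
      push_cast
      field_simp

lemma stirling2_mul_factorial_eq_fwdDiff_iter (n k : ℕ) :
    stirling2 n k * k.factorial = Δ_[1] ^[k] (X ^ n : ℚ[X]).eval 0 := by
  have : (k.factorial : ℚ) ≠ 0 := mod_cast k.factorial_ne_zero
  rw [stirling2, mul_right_comm, one_div_mul_cancel this, one_mul, fwdDiff_iter_eq_sum_shift]
  simp

/-- The Bernoulli umbra: the linear functional on `ℚ[X]` that sends `X ^ m` to the Bernoulli number
`B_m`. -/
noncomputable def bernoulliUmbra : ℚ[X] →ₗ[ℚ] ℚ :=
  Polynomial.lsum fun m => LinearMap.mulRight ℚ (bernoulli m)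

namespace bernoulliUmbra

lemma map_monomial (m : ℕ) (a : ℚ) :
    bernoulliUmbra (monomial m a) = a * bernoulli m := by
  simp [bernoulliUmbra, sum_monomial_index]

lemma map_X_pow_mul (n : ℕ) (f : ℚ[X]) :
    bernoulliUmbra (X ^ n * f) =
      ∑ j ∈ Finset.range (f.natDegree + 1), f.coeff j * bernoulli (n + j) := by
  conv_lhs => rw [f.as_sum_range, Finset.mul_sum, map_sum]
  simp only [X_pow_mul_monomial, map_monomial, add_comm]

lemma map_comp_X_add_one (f : ℚ[X]) :
    bernoulliUmbra (f.comp (X + 1)) = bernoulliUmbra f + f.coeff 1 := by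
  induction f using Polynomial.induction_on' with
  | add f g hf hg => simp only [add_comp, map_add, coeff_add, hf, hg]; ring
  | monomial m a =>
    have h_expand : (monomial m a).comp (X + 1) =
        ∑ i ∈ Finset.range (m + 1), monomial i (a * m.choose i) := by
      rw [monomial_comp, add_pow, Finset.mul_sum]
      refine Finset.sum_congr rfl fun i _ => ?_
      rw [one_pow, mul_one, ← C_mul_X_pow_eq_monomial, C_mul, C_eq_natCast]
      ring
    rw [h_expand, map_sum, Finset.sum_range_succ, add_comm]
    simp only [map_monomial, mul_assoc, ← Finset.mul_sum, sum_bernoulli, Nat.choose_self,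
      Nat.cast_one, coeff_monomial, mul_ite, mul_one, mul_zero]

lemma map_descPochhammer (k : ℕ) :
    bernoulliUmbra (descPochhammer ℚ k) = (-1) ^ k * k.factorial / (k + 1) := by
  have h := map_comp_X_add_one (descPochhammer ℚ (k + 1))
  rw [descPochhammer_succ_comp_X_add_one, map_add, map_smul, descPochhammer_succ_coeff_one,
    smul_eq_mul] at h
  rw [eq_div_iff (by positivity), mul_comm]
  exact add_left_cancel h

lemma map_descPochhammer_mul_descPochhammer (k p : ℕ) :
    bernoulliUmbra (descPochhammer ℚ k * descPochhammer ℚ p) =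
      (-1) ^ (k + p) * (k.factorial ^ 2 * p.factorial ^ 2) / (k + p + 1).factorial := by
  induction p generalizing k with
  | zero =>
    have : (k.factorial : ℚ) ≠ 0 := mod_cast k.factorial_ne_zero
    rw [descPochhammer_zero, mul_one, map_descPochhammer, add_zero, Nat.factorial_succ]
    push_cast
    field_simp
    simp
  | succ p ih =>
    have : ((k + p + 1).factorial : ℚ) ≠ 0 := mod_cast (k + p + 1).factorial_ne_zero
    rw [descPochhammer_mul_descPochhammer_succ, map_add, map_smul, ih, ih, smul_eq_mul,
      show k + 1 + p = k + p + 1 by ring, ← add_assoc k p 1, Nat.factorial_succ (k + p + 1),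
      Nat.factorial_succ k, Nat.factorial_succ p]
    push_cast
    field_simp
    ring

lemma map_descPochhammer_mul_descPochhammer_eq_inv_choose (k p : ℕ) :
    bernoulliUmbra (descPochhammer ℚ k * descPochhammer ℚ p) =
      (-1) ^ p * p.factorial / (p + 1) *
        ((-1) ^ k * k.factorial * ((k + p + 1).choose k : ℚ)⁻¹) := by
  have h_choose : ((k + p + 1).choose k : ℚ) =
      (k + p + 1).factorial / (k.factorial * (p + 1).factorial) := by
    rw [add_assoc, Nat.cast_add_choose]
  have : (p.factorial : ℚ) ≠ 0 := mod_cast p.factorial_ne_zero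
  rw [map_descPochhammer_mul_descPochhammer, h_choose, inv_div, Nat.factorial_succ p]
  push_cast
  field_simp
  ring

lemma map_mul_descPochhammer {f : ℚ[X]} {n : ℕ} (hf : f.natDegree ≤ n) (p : ℕ) :
    bernoulliUmbra (f * descPochhammer ℚ p) =
      (-1) ^ p * p.factorial / (p + 1) *
        ∑ k ∈ Finset.range (n + 1),
          (-1) ^ k * Δ_[1] ^[k] f.eval 0 * ((k + p + 1).choose k : ℚ)⁻¹ := by
  conv_lhs => rw [eq_sum_fwdDiff_iter_smul_descPochhammer hf, Finset.sum_mul, map_sum]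
  rw [Finset.mul_sum]
  refine Finset.sum_congr rfl fun k _ => ?_
  have : (k.factorial : ℚ) ≠ 0 := mod_cast k.factorial_ne_zero
  rw [smul_mul_assoc, map_smul, map_descPochhammer_mul_descPochhammer_eq_inv_choose, smul_eq_mul]
  field_simp

end bernoulliUmbra

lemma sum_stirling1_mul_bernoulli (n p : ℕ) :
    ∑ j ∈ Finset.range (p + 1), (-1) ^ j * stirling1 p j * bernoulli (n + j) =
      (-1) ^ p * bernoulliUmbra (X ^ n * descPochhammer ℚ p) := by
  have h_natDegree : ((ascPochhammer ℚ p).comp (-X)).natDegree = p := by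
    rw [natDegree_comp, natDegree_neg, natDegree_X, mul_one, ascPochhammer_natDegree]
  have h_coeff (j : ℕ) : ((ascPochhammer ℚ p).comp (-X)).coeff j = (-1) ^ j * stirling1 p j := by
    rw [← neg_one_mul, ← C_1, ← C_neg, comp_C_mul_X_coeff, mul_comm, stirling1]
  calc
    _ = bernoulliUmbra (X ^ n * (ascPochhammer ℚ p).comp (-X)) := by
      simp only [bernoulliUmbra.map_X_pow_mul, h_natDegree, h_coeff]
    _ = _ := by
      rw [ascPochhammer_comp_neg_X, mul_left_comm, ← C_1, ← C_neg, ← C_pow, ← smul_eq_C_mul,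
        map_smul, smul_eq_mul]

lemma pBernoulli_eq_sum_fwdDiff_iter (n p : ℕ) :
    pBernoulli n p = ∑ k ∈ Finset.range (n + 1),
      (-1) ^ k * Δ_[1] ^[k] (X ^ n : ℚ[X]).eval 0 * ((k + p + 1).choose k : ℚ)⁻¹ := by
  refine Finset.sum_congr rfl fun k _ => ?_
  rw [← stirling2_mul_factorial_eq_fwdDiff_iter]
  ring

theorem pBernoulli_eq_sum_bernoulli (n p : ℕ) :
    pBernoulli n p =
      (((p : ℚ) + 1) / (Nat.factorial p : ℚ)) *
        ∑ j ∈ Finset.range (p + 1), (-1 : ℚ) ^ j * stirling1 p j * bernoulli (n + j) := by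
  have h_sign : (-1 : ℚ) ^ p * (-1) ^ p = 1 := by rw [← pow_add, Even.neg_one_pow ⟨p, rfl⟩]
  have h_factorial : (p.factorial : ℚ) ≠ 0 := mod_cast p.factorial_ne_zero
  rw [sum_stirling1_mul_bernoulli, bernoulliUmbra.map_mul_descPochhammer (natDegree_X_pow_le n),
    ← pBernoulli_eq_sum_fwdDiff_iter]
  field_simp
  linear_combination (-pBernoulli n p) * h_sign
end
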